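/- For matrix-valued functions A_x, A_y, A_t, Φ on ℝ³, the three Bogomolny equations −∇_tΦ = [∇_x,∇_y], ∇_xΦ = [∇_y,∇_t], ∇_yΦ = [∇_t,∇_x] hold if and only if for every λ ∈ ℂ∖{0}, the operators L_λ = ∇_{z̄} + (iλ/2)∇_t − (λ/2)Φ and M_λ = ∇_z − (i/(2λ))∇_t − (1/(2λ))Φ commute, where ∇_z = ½(∇_x − i∇_y) and ∇_{z̄} = ½(∇_x + i∇_y). -/

import Mathlib

attribute [local instance] Matrix.normedAddCommGroup Matrix.normedSpace

/-- Partial derivative on ℝ³ (coordinates (x,y,t)) in direction `v`. -/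
noncomputable def pderiv {N : ℕ} (v : ℝ × ℝ × ℝ)
    (f : ℝ × ℝ × ℝ → Matrix (Fin N) (Fin N) ℂ) :
    ℝ × ℝ × ℝ → Matrix (Fin N) (Fin N) ℂ :=
  fun p => fderiv ℝ f p v

/-- The covariant derivative `∇_v f = ∂_v f + A·f` for a connection coefficient `A`. -/
noncomputable def covDeriv {N : ℕ} (v : ℝ × ℝ × ℝ)
    (A f : ℝ × ℝ × ℝ → Matrix (Fin N) (Fin N) ℂ) :
    ℝ × ℝ × ℝ → Matrix (Fin N) (Fin N) ℂ :=
  fun p => pderiv v f p + A p * f p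

/-- The Lax operator `L_λ = ∇_{z̄} + (iλ/2)∇_t − (λ/2)Φ`,
with `∇_{z̄} = ½(∇_x + i∇_y)`. -/
noncomputable def Lop {N : ℕ} (lam : ℂ)
    (Ax Ay At Φ f : ℝ × ℝ × ℝ → Matrix (Fin N) (Fin N) ℂ) :
    ℝ × ℝ × ℝ → Matrix (Fin N) (Fin N) ℂ :=
  fun p => (2 : ℂ)⁻¹ • (covDeriv (1,0,0) Ax f p + Complex.I • covDeriv (0,1,0) Ay f p)
    + ((Complex.I * lam) / 2) • covDeriv (0,0,1) At f p
    - (lam / 2) • (Φ p * f p)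

/-- The Lax operator `M_λ = ∇_z − (i/(2λ))∇_t − (1/(2λ))Φ`,
with `∇_z = ½(∇_x − i∇_y)`. -/
noncomputable def Mop {N : ℕ} (lam : ℂ)
    (Ax Ay At Φ f : ℝ × ℝ × ℝ → Matrix (Fin N) (Fin N) ℂ) :
    ℝ × ℝ × ℝ → Matrix (Fin N) (Fin N) ℂ :=
  fun p => (2 : ℂ)⁻¹ • (covDeriv (1,0,0) Ax f p - Complex.I • covDeriv (0,1,0) Ay f p)
    - (Complex.I / (2 * lam)) • covDeriv (0,0,1) At f p
    - (1 / (2 * lam)) • (Φ p * f p)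

noncomputable def bogMulB (N : ℕ) : Matrix (Fin N) (Fin N) ℂ →L[ℝ]
    Matrix (Fin N) (Fin N) ℂ →L[ℝ] Matrix (Fin N) (Fin N) ℂ :=
  LinearMap.toContinuousLinearMap
    ((LinearMap.toContinuousLinearMap (𝕜 := ℝ) (E := Matrix (Fin N) (Fin N) ℂ)
      (F' := Matrix (Fin N) (Fin N) ℂ)).toLinearMap ∘ₗ LinearMap.mul ℝ (Matrix (Fin N) (Fin N) ℂ))

theorem bogMulB_apply {N : ℕ} (a b : Matrix (Fin N) (Fin N) ℂ) : bogMulB N a b = a * b := rfl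

theorem bog_hasFDerivAt_mul {N : ℕ} {f g : ℝ × ℝ × ℝ → Matrix (Fin N) (Fin N) ℂ}
    (hf : Differentiable ℝ f) (hg : Differentiable ℝ g) (p : ℝ × ℝ × ℝ) :
    HasFDerivAt (fun q => f q * g q)
      ((bogMulB N).precompR (ℝ × ℝ × ℝ) (f p) (fderiv ℝ g p)
        + (bogMulB N).precompL (ℝ × ℝ × ℝ) (fderiv ℝ f p) (g p)) p :=
  (bogMulB N).hasFDerivAt_of_bilinear (hf p).hasFDerivAt (hg p).hasFDerivAt

theorem bog_diff_mul {N : ℕ} {f g : ℝ × ℝ × ℝ → Matrix (Fin N) (Fin N) ℂ}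
    (hf : Differentiable ℝ f) (hg : Differentiable ℝ g) :
    Differentiable ℝ (fun q => f q * g q) :=
  fun p => (bog_hasFDerivAt_mul hf hg p).differentiableAt

theorem bog_pderiv_mul {N : ℕ} (v : ℝ × ℝ × ℝ) {f g : ℝ × ℝ × ℝ → Matrix (Fin N) (Fin N) ℂ}
    (hf : Differentiable ℝ f) (hg : Differentiable ℝ g) (p : ℝ × ℝ × ℝ) :
    pderiv v (fun q => f q * g q) p = pderiv v f p * g p + f p * pderiv v g p := by
  unfold pderiv
  have h2 := congrArg (fun T => T v) (bog_hasFDerivAt_mul hf hg p).fderiv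
  exact h2.trans (add_comm _ _)

theorem bog_pderiv_add {N : ℕ} (v : ℝ × ℝ × ℝ) {f g : ℝ × ℝ × ℝ → Matrix (Fin N) (Fin N) ℂ}
    (hf : Differentiable ℝ f) (hg : Differentiable ℝ g) (p : ℝ × ℝ × ℝ) :
    pderiv v (fun q => f q + g q) p = pderiv v f p + pderiv v g p := by
  unfold pderiv
  exact congrArg (fun T => T v) (fderiv_fun_add (hf p) (hg p))

theorem bog_pderiv_comb {N : ℕ} (v : ℝ × ℝ × ℝ) (a b c d : ℂ)
    {f g h k : ℝ × ℝ × ℝ → Matrix (Fin N) (Fin N) ℂ}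
    (hf : Differentiable ℝ f) (hg : Differentiable ℝ g)
    (hh : Differentiable ℝ h) (hk : Differentiable ℝ k) (p : ℝ × ℝ × ℝ) :
    pderiv v (fun q => a • f q + b • g q + c • h q + d • k q) p
      = a • pderiv v f p + b • pderiv v g p + c • pderiv v h p + d • pderiv v k p := by
  unfold pderiv
  have := ((((hf p).hasFDerivAt.const_smul a).add ((hg p).hasFDerivAt.const_smul b)).add
    ((hh p).hasFDerivAt.const_smul c)).add ((hk p).hasFDerivAt.const_smul d)
  have h2 := this.fderiv
  exact congrArg (fun T => T v) h2

theorem bog_cov_comb {N : ℕ} (v : ℝ × ℝ × ℝ) (a b c d : ℂ)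
    {A f g h k : ℝ × ℝ × ℝ → Matrix (Fin N) (Fin N) ℂ}
    (hf : Differentiable ℝ f) (hg : Differentiable ℝ g)
    (hh : Differentiable ℝ h) (hk : Differentiable ℝ k) (p : ℝ × ℝ × ℝ) :
    covDeriv v A (fun q => a • f q + b • g q + c • h q + d • k q) p
      = a • covDeriv v A f p + b • covDeriv v A g p + c • covDeriv v A h p
        + d • covDeriv v A k p := by
  unfold covDeriv
  rw [bog_pderiv_comb v a b c d hf hg hh hk]
  simp only [mul_add, mul_smul_comm, smul_add]
  abel

theorem bog_gen_diff {E : Type*} [NormedAddCommGroup E] [NormedSpace ℝ E] (v : ℝ × ℝ × ℝ)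
    {f : ℝ × ℝ × ℝ → E} (hf : ContDiff ℝ 2 f) : Differentiable ℝ (fun p => fderiv ℝ f p v) := by
  have h1 : ContDiff ℝ 1 (fderiv ℝ f) := hf.fderiv_right (by norm_num)
  exact (h1.differentiable (by norm_num)).clm_apply (differentiable_const v)

theorem bog_gen_symm {E : Type*} [NormedAddCommGroup E] [NormedSpace ℝ E] (v w : ℝ × ℝ × ℝ)
    {f : ℝ × ℝ × ℝ → E} (hf : ContDiff ℝ 2 f) (p : ℝ × ℝ × ℝ) :
    fderiv ℝ (fun q => fderiv ℝ f q w) p v = fderiv ℝ (fun q => fderiv ℝ f q v) p w := by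
  have h1 : ContDiff ℝ 1 (fderiv ℝ f) := hf.fderiv_right (by norm_num)
  have h2 := h1.differentiable (by norm_num) p
  have key : ∀ a b : ℝ × ℝ × ℝ,
      fderiv ℝ (fun q => fderiv ℝ f q b) p a = fderiv ℝ (fderiv ℝ f) p a b := by
    intro a b
    have := (h2.hasFDerivAt.clm_apply (hasFDerivAt_const b p)).fderiv
    rw [this]
    simp
  rw [key, key]
  exact (hf.contDiffAt.isSymmSndFDerivAt (by simp)) v w

theorem bog_diff_pderiv {N : ℕ} (v : ℝ × ℝ × ℝ) {f : ℝ × ℝ × ℝ → Matrix (Fin N) (Fin N) ℂ}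
    (hf : ContDiff ℝ 2 f) : Differentiable ℝ (pderiv v f) :=
  bog_gen_diff v hf

theorem bog_diff_cov {N : ℕ} (v : ℝ × ℝ × ℝ) {A f : ℝ × ℝ × ℝ → Matrix (Fin N) (Fin N) ℂ}
    (hA : Differentiable ℝ A) (hf : ContDiff ℝ 2 f) : Differentiable ℝ (covDeriv v A f) :=
  (bog_diff_pderiv v hf).add (bog_diff_mul hA (hf.differentiable (by norm_num)))

theorem bog_symm {N : ℕ} (v w : ℝ × ℝ × ℝ) {f : ℝ × ℝ × ℝ → Matrix (Fin N) (Fin N) ℂ}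
    (hf : ContDiff ℝ 2 f) (p : ℝ × ℝ × ℝ) :
    pderiv v (pderiv w f) p = pderiv w (pderiv v f) p :=
  bog_gen_symm v w hf p

theorem bog_curv {N : ℕ} (v w : ℝ × ℝ × ℝ) {A B f : ℝ × ℝ × ℝ → Matrix (Fin N) (Fin N) ℂ}
    (hA : Differentiable ℝ A) (hB : Differentiable ℝ B) (hf : ContDiff ℝ 2 f) (p : ℝ × ℝ × ℝ) :
    covDeriv v A (covDeriv w B f) p = covDeriv w B (covDeriv v A f) p
      + (pderiv v B p - pderiv w A p + (A p * B p - B p * A p)) * f p := by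
  have hf1 : Differentiable ℝ f := hf.differentiable (by norm_num)
  have key : ∀ (v w : ℝ × ℝ × ℝ) {A B : ℝ × ℝ × ℝ → Matrix (Fin N) (Fin N) ℂ},
      Differentiable ℝ B → covDeriv v A (covDeriv w B f) p = pderiv v (pderiv w f) p
        + (pderiv v B p * f p + B p * pderiv v f p) + A p * (pderiv w f p + B p * f p) := by
    intro v w A B hB
    rw [← bog_pderiv_mul v hB hf1, ← bog_pderiv_add v (bog_diff_pderiv w hf) (bog_diff_mul hB hf1)]
    rfl
  rw [key v w hB, key w v hA, bog_symm v w hf]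
  noncomm_ring

theorem bog_cov_phi {N : ℕ} (v : ℝ × ℝ × ℝ) {A P f : ℝ × ℝ × ℝ → Matrix (Fin N) (Fin N) ℂ}
    (hP : Differentiable ℝ P) (hf : Differentiable ℝ f) (p : ℝ × ℝ × ℝ) :
    covDeriv v A (fun q => P q * f q) p = P p * covDeriv v A f p
      + (pderiv v P p + (A p * P p - P p * A p)) * f p := by
  unfold covDeriv
  rw [bog_pderiv_mul v hP hf]
  noncomm_ring

theorem bog_L {N : ℕ} (lam : ℂ) (Ax Ay At Φ f : ℝ × ℝ × ℝ → Matrix (Fin N) (Fin N) ℂ) :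
    Lop lam Ax Ay At Φ f = fun p => (2 : ℂ)⁻¹ • covDeriv (1,0,0) Ax f p
      + (Complex.I / 2) • covDeriv (0,1,0) Ay f p
      + ((Complex.I * lam) / 2) • covDeriv (0,0,1) At f p + (- (lam / 2)) • (Φ p * f p) := by
  funext p
  unfold Lop
  module

theorem bog_M {N : ℕ} (lam : ℂ) (Ax Ay At Φ f : ℝ × ℝ × ℝ → Matrix (Fin N) (Fin N) ℂ) :
    Mop lam Ax Ay At Φ f = fun p => (2 : ℂ)⁻¹ • covDeriv (1,0,0) Ax f p
      + (- (Complex.I / 2)) • covDeriv (0,1,0) Ay f p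
      + (- (Complex.I * lam⁻¹ / 2)) • covDeriv (0,0,1) At f p
      + (- (lam⁻¹ / 2)) • (Φ p * f p) := by
  funext p
  unfold Mop
  rw [show Complex.I / (2 * lam) = Complex.I * lam⁻¹ / 2 by rw [div_eq_mul_inv, mul_inv]; ring,
    show 1 / (2 * lam) = lam⁻¹ / 2 by rw [div_eq_mul_inv, mul_inv]; ring]
  module

/-- The commutator of the Lax operators. -/
theorem bog_comm {N : ℕ} (lam : ℂ) (hl : lam ≠ 0)
    (Ax Ay At Φ f : ℝ × ℝ × ℝ → Matrix (Fin N) (Fin N) ℂ)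
    (hAx : Differentiable ℝ Ax) (hAy : Differentiable ℝ Ay)
    (hAt : Differentiable ℝ At) (hΦ : Differentiable ℝ Φ) (hf : ContDiff ℝ 2 f) (p : ℝ × ℝ × ℝ)
    (Fxy Fyt Ftx Px Py Pt : Matrix (Fin N) (Fin N) ℂ)
    (h1 : pderiv (1,0,0) Ay p - pderiv (0,1,0) Ax p + (Ax p * Ay p - Ay p * Ax p) = Fxy)
    (h2 : pderiv (0,1,0) At p - pderiv (0,0,1) Ay p + (Ay p * At p - At p * Ay p) = Fyt)
    (h3 : pderiv (0,0,1) Ax p - pderiv (1,0,0) At p + (At p * Ax p - Ax p * At p) = Ftx)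
    (h4 : pderiv (1,0,0) Φ p + (Ax p * Φ p - Φ p * Ax p) = Px)
    (h5 : pderiv (0,1,0) Φ p + (Ay p * Φ p - Φ p * Ay p) = Py)
    (h6 : pderiv (0,0,1) Φ p + (At p * Φ p - Φ p * At p) = Pt) :
    Lop lam Ax Ay At Φ (Mop lam Ax Ay At Φ f) p - Mop lam Ax Ay At Φ (Lop lam Ax Ay At Φ f) p
      = (-(Complex.I / 2)) • ((Fxy + Pt) * f p)
        + (lam / 4) • ((Px - Fyt) * f p - Complex.I • ((Py - Ftx) * f p))
        + (-(lam⁻¹ / 4)) • ((Px - Fyt) * f p + Complex.I • ((Py - Ftx) * f p)) := by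
  have hf1 : Differentiable ℝ f := hf.differentiable (by norm_num)
  have dx := bog_diff_cov (1,0,0) hAx hf
  have dy := bog_diff_cov (0,1,0) hAy hf
  have dt := bog_diff_cov (0,0,1) hAt hf
  have dp := bog_diff_mul hΦ hf1
  rw [bog_L, bog_M, bog_M, bog_L]
  simp only [bog_cov_comb _ _ _ _ _ dx dy dt dp]
  rw [bog_cov_phi _ hΦ hf1, bog_cov_phi _ hΦ hf1, bog_cov_phi _ hΦ hf1,
    bog_curv (1,0,0) (0,1,0) hAx hAy hf, bog_curv (0,1,0) (0,0,1) hAy hAt hf,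
    bog_curv (0,0,1) (1,0,0) hAt hAx hf, h1, h2, h3, h4, h5, h6]
  simp only [mul_add, mul_smul_comm, add_mul, sub_mul]
  have hI : Complex.I ^ 2 = -1 := Complex.I_sq
  have hll : lam * lam⁻¹ = 1 := mul_inv_cancel₀ hl
  match_scalars <;> grind

/-- The three Bogomolny equations hold iff the Lax operators
`L_λ` and `M_λ` commute for every `λ ∈ ℂ∖{0}`. -/
theorem bogomolny_iff_lax_commute {N : ℕ}
    (Ax Ay At Φ : ℝ × ℝ × ℝ → Matrix (Fin N) (Fin N) ℂ)
    (hAx : ContDiff ℝ (⊤ : ℕ∞) Ax) (hAy : ContDiff ℝ (⊤ : ℕ∞) Ay)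
    (hAt : ContDiff ℝ (⊤ : ℕ∞) At) (hΦ : ContDiff ℝ (⊤ : ℕ∞) Φ) :
    ( -- −∇_tΦ = [∇_x,∇_y]
      (∀ p, -(pderiv (0,0,1) Φ p + (At p * Φ p - Φ p * At p))
          = pderiv (1,0,0) Ay p - pderiv (0,1,0) Ax p + (Ax p * Ay p - Ay p * Ax p)) ∧
      -- ∇_xΦ = [∇_y,∇_t]
      (∀ p, pderiv (1,0,0) Φ p + (Ax p * Φ p - Φ p * Ax p)
          = pderiv (0,1,0) At p - pderiv (0,0,1) Ay p + (Ay p * At p - At p * Ay p)) ∧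
      -- ∇_yΦ = [∇_t,∇_x]
      (∀ p, pderiv (0,1,0) Φ p + (Ay p * Φ p - Φ p * Ay p)
          = pderiv (0,0,1) Ax p - pderiv (1,0,0) At p + (At p * Ax p - Ax p * At p)) )
    ↔
    (∀ lam : ℂ, lam ≠ 0 → ∀ f : ℝ × ℝ × ℝ → Matrix (Fin N) (Fin N) ℂ,
      ContDiff ℝ 2 f → ∀ p,
        Lop lam Ax Ay At Φ (Mop lam Ax Ay At Φ f) p
          = Mop lam Ax Ay At Φ (Lop lam Ax Ay At Φ f) p) := by
  have dAx : Differentiable ℝ Ax := hAx.differentiable (by simp)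
  have dAy : Differentiable ℝ Ay := hAy.differentiable (by simp)
  have dAt : Differentiable ℝ At := hAt.differentiable (by simp)
  have dΦ : Differentiable ℝ Φ := hΦ.differentiable (by simp)
  constructor
  · rintro ⟨e1, e2, e3⟩ lam hl f hf p
    have := bog_comm lam hl Ax Ay At Φ f dAx dAy dAt dΦ hf p _ _ _ _ _ _
      rfl rfl rfl rfl rfl rfl
    rw [← e1 p, ← e2 p, ← e3 p] at this
    rw [← sub_eq_zero, this]
    simp
  · intro H
    have key : ∀ p, _ := fun p => fun (lam : ℂ) (hl : lam ≠ 0) =>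
      (bog_comm lam hl Ax Ay At Φ (fun _ => 1) dAx dAy dAt dΦ contDiff_const p _ _ _ _ _ _
      rfl rfl rfl rfl rfl rfl).symm.trans (sub_eq_zero.2 (H lam hl _ contDiff_const p))
    have fin : ∀ X Y Z : Matrix (Fin N) (Fin N) ℂ, (∀ lam : ℂ, lam ≠ 0 →
        (-(Complex.I / 2)) • (X * 1)
        + (lam / 4) • (Y * 1 - Complex.I • (Z * 1))
        + (-(lam⁻¹ / 4)) • (Y * 1 + Complex.I • (Z * 1)) = 0) → X = 0 ∧ Y = 0 ∧ Z = 0 := by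
      intro X Y Z h
      have a1 := h 1 (by norm_num)
      have a2 := h (-1) (by norm_num)
      have a3 := h 2 (by norm_num)
      simp only [mul_one] at a1 a2 a3
      have hI : Complex.I ^ 2 = -1 := Complex.I_sq
      have hx : ∀ i j, X i j = 0 ∧ Y i j = 0 ∧ Z i j = 0 := by
        intro i j
        have b1 := congrFun (congrFun a1 i) j
        have b2 := congrFun (congrFun a2 i) j
        have b3 := congrFun (congrFun a3 i) j
        simp only [Matrix.add_apply, Matrix.sub_apply, Matrix.smul_apply, smul_eq_mul,
          Matrix.zero_apply] at b1 b2 b3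
        norm_num at b1 b2 b3
        refine ⟨?_, ?_, ?_⟩ <;> grind
      exact ⟨by ext i j; exact (hx i j).1, by ext i j; exact (hx i j).2.1,
        by ext i j; exact (hx i j).2.2⟩
    refine ⟨fun p => ?_, fun p => ?_, fun p => ?_⟩
    · exact (eq_neg_of_add_eq_zero_left (fin _ _ _ (key p)).1).symm
    · exact sub_eq_zero.1 (fin _ _ _ (key p)).2.1
    · exact sub_eq_zero.1 (fin _ _ _ (key p)).2.2
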